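/- arXiv:1407.1942 — 4 statements merged into one kernel-verified Lean document; each statement's English description precedes it below -/
import Mathlib

section
/- Let G be a group, N a normal subgroup of G, and let ρ, ρ' : G → M₅(ℂ) be group homomorphisms into invertible 5×5 complex matrices such that for every g ∈ G the matrices ρ(g) and ρ'(g) are special orthogonal, i.e. ρ(g)ᵀ · ρ(g) = I and det ρ(g) = 1, and likewise for ρ'. Assume that ρ(n) = ρ'(n) for every n ∈ N, and that N acts irreducibly via ρ, i.e. the only ℂ-linear subspaces W ⊆ ℂ⁵ with ρ(n)·W ⊆ W for all n ∈ N are W = 0 and W = ℂ⁵. Then ρ(g) = ρ'(g) for all g ∈ G. -/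
open Matrix

/-- Two homomorphisms into `SO₅(ℂ)` agreeing on a normal subgroup acting
irreducibly must be equal. -/
theorem so5_agree_on_irreducible_normal_subgroup
    (G : Type*) [Group G] (N : Subgroup G) (hN : N.Normal)
    (ρ ρ' : G →* GL (Fin 5) ℂ)
    (hρSO : ∀ g : G, ((ρ g : Matrix (Fin 5) (Fin 5) ℂ))ᵀ * (ρ g : Matrix (Fin 5) (Fin 5) ℂ) = 1 ∧
      (ρ g : Matrix (Fin 5) (Fin 5) ℂ).det = 1)
    (hρ'SO : ∀ g : G, ((ρ' g : Matrix (Fin 5) (Fin 5) ℂ))ᵀ * (ρ' g : Matrix (Fin 5) (Fin 5) ℂ) = 1 ∧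
      (ρ' g : Matrix (Fin 5) (Fin 5) ℂ).det = 1)
    (hagree : ∀ n ∈ N, ρ n = ρ' n)
    (hirr : ∀ W : Submodule ℂ (Fin 5 → ℂ),
      (∀ n ∈ N, ∀ v ∈ W, (ρ n : Matrix (Fin 5) (Fin 5) ℂ).mulVec v ∈ W) → W = ⊥ ∨ W = ⊤) :
    ∀ g : G, ρ g = ρ' g := by
  intro g
  have hcomm : ∀ n ∈ N, ((ρ g)⁻¹ * ρ' g) * ρ n = ρ n * ((ρ g)⁻¹ * ρ' g) := by
    intro n hn
    have h1 := hagree _ (hN.conj_mem n hn g)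
    simp only [map_mul, map_inv] at h1
    rw [← hagree n hn] at h1
    have h2 : ρ g * ρ n * (ρ g)⁻¹ * ρ' g = ρ' g * ρ n := by
      rw [h1]; group
    rw [mul_assoc, ← h2]; group
  obtain ⟨T, hT⟩ : ∃ T, T = (ρ g)⁻¹ * ρ' g := ⟨_, rfl⟩
  rw [← hT] at hcomm
  have hg : ρ' g = ρ g * T := by rw [hT]; group
  obtain ⟨c, hc⟩ := Module.End.exists_eigenvalue (Matrix.toLin' (T : Matrix (Fin 5) (Fin 5) ℂ))
  have htop : Module.End.eigenspace (Matrix.toLin' (T : Matrix (Fin 5) (Fin 5) ℂ)) c = ⊤ := by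
    refine (hirr _ ?_).resolve_left hc
    intro n hn v hv
    rw [Module.End.mem_eigenspace_iff, Matrix.toLin'_apply] at hv ⊢
    have h3 : (T : Matrix (Fin 5) (Fin 5) ℂ) * (ρ n : Matrix (Fin 5) (Fin 5) ℂ)
        = (ρ n : Matrix (Fin 5) (Fin 5) ℂ) * (T : Matrix (Fin 5) (Fin 5) ℂ) :=
      congrArg Units.val (hcomm n hn)
    rw [Matrix.mulVec_mulVec, h3, ← Matrix.mulVec_mulVec, hv, Matrix.mulVec_smul]
  have hTc : (T : Matrix (Fin 5) (Fin 5) ℂ) = c • (1 : Matrix (Fin 5) (Fin 5) ℂ) := by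
    apply Matrix.toLin'.injective
    ext1 i
    ext1
    have hv : Pi.single i (1 : ℂ) ∈
        Module.End.eigenspace (Matrix.toLin' (T : Matrix (Fin 5) (Fin 5) ℂ)) c := by
      rw [htop]; trivial
    rw [Module.End.mem_eigenspace_iff] at hv
    simpa using hv
  have hgm : (ρ' g : Matrix (Fin 5) (Fin 5) ℂ) = c • (ρ g : Matrix (Fin 5) (Fin 5) ℂ) := by
    rw [hg, Units.val_mul, hTc]; simp
  have ho := (hρ'SO g).1
  have hd := (hρ'SO g).2
  rw [hgm, Matrix.transpose_smul, Matrix.smul_mul, Matrix.mul_smul, (hρSO g).1, smul_smul] at ho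
  rw [hgm, Matrix.det_smul, (hρSO g).2] at hd
  have hc2 : c * c = 1 := by
    have := congrFun (congrFun ho 0) 0
    simpa using this
  have hc5 : c ^ 5 = 1 := by simpa using hd
  have hc1 : c = 1 := by
    linear_combination hc5 - (c ^ 3 + c) * hc2
  apply Units.ext
  rw [hgm, hc1, one_smul]
end

section
/- Let n ≥ 1, let J be an invertible n×n complex matrix, and let G be a subgroup of GLₙ(ℂ) such that gᵀ · J · g = J for every g ∈ G, and such that G acts irreducibly on ℂⁿ (the only ℂ-linear subspaces W ⊆ ℂⁿ with g·W ⊆ W for all g ∈ G are W = 0 and W = ℂⁿ). If A ∈ GLₙ(ℂ) normalizes G, i.e. A·g·A⁻¹ ∈ G for every g ∈ G, then there exists a nonzero scalar c ∈ ℂ such that Aᵀ · J · A = c · J. -/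
open Matrix

/-- The normalizer in `GLₙ(ℂ)` of an irreducible subgroup preserving a
nondegenerate bilinear form `J` lies in the similitude group of `J`. -/
theorem normalizer_of_irreducible_preserving_form_is_similitude
    (n : ℕ) (hn : 1 ≤ n) (J : Matrix (Fin n) (Fin n) ℂ) (hJ : IsUnit J)
    (G : Subgroup (GL (Fin n) ℂ))
    (hform : ∀ g ∈ G, ((g : Matrix (Fin n) (Fin n) ℂ))ᵀ * J * (g : Matrix (Fin n) (Fin n) ℂ) = J)
    (hirr : ∀ W : Submodule ℂ (Fin n → ℂ),
      (∀ g ∈ G, ∀ v ∈ W, (g : Matrix (Fin n) (Fin n) ℂ).mulVec v ∈ W) → W = ⊥ ∨ W = ⊤)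
    (A : GL (Fin n) ℂ) (hA : ∀ g ∈ G, A * g * A⁻¹ ∈ G) :
    ∃ c : ℂ, c ≠ 0 ∧
      ((A : Matrix (Fin n) (Fin n) ℂ))ᵀ * J * (A : Matrix (Fin n) (Fin n) ℂ) = c • J := by
  haveI : Nonempty (Fin n) := ⟨⟨0, hn⟩⟩
  obtain ⟨B, rfl⟩ := hJ
  set K : Matrix (Fin n) (Fin n) ℂ :=
    (A : Matrix (Fin n) (Fin n) ℂ)ᵀ * (B : Matrix (Fin n) (Fin n) ℂ) * (A : Matrix (Fin n) (Fin n) ℂ) with hK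
  have hKg : ∀ g ∈ G, (g : Matrix (Fin n) (Fin n) ℂ)ᵀ * K * (g : Matrix (Fin n) (Fin n) ℂ) = K := by
    intro g hg
    have h1 := hform _ (hA g hg)
    have h2 : ((A * g * A⁻¹ : GL (Fin n) ℂ) : Matrix (Fin n) (Fin n) ℂ) * (A : Matrix (Fin n) (Fin n) ℂ)
        = (A : Matrix (Fin n) (Fin n) ℂ) * (g : Matrix (Fin n) (Fin n) ℂ) := by
      rw [← Units.val_mul, ← Units.val_mul, inv_mul_cancel_right]
    generalize ((A * g * A⁻¹ : GL (Fin n) ℂ) : Matrix (Fin n) (Fin n) ℂ) = H at h1 h2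
    calc _ = ((A : Matrix (Fin n) (Fin n) ℂ) * (g : Matrix (Fin n) (Fin n) ℂ))ᵀ * (B : Matrix (Fin n) (Fin n) ℂ)
            * ((A : Matrix (Fin n) (Fin n) ℂ) * (g : Matrix (Fin n) (Fin n) ℂ)) := by
          rw [hK, transpose_mul]; simp only [Matrix.mul_assoc]
      _ = (A : Matrix (Fin n) (Fin n) ℂ)ᵀ * (Hᵀ * (B : Matrix (Fin n) (Fin n) ℂ) * H)
            * (A : Matrix (Fin n) (Fin n) ℂ) := by
          rw [← h2, transpose_mul]; simp only [Matrix.mul_assoc]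
      _ = K := by rw [h1]
  obtain ⟨c, hc⟩ := Module.End.exists_eigenvalue
    (Matrix.toLin' (((B⁻¹ : GL (Fin n) ℂ) : Matrix (Fin n) (Fin n) ℂ) * K))
  obtain ⟨v, hv⟩ := hc.exists_hasEigenvector
  have hv1 := hv.apply_eq_smul
  have hv0 := hv.2
  rw [Matrix.toLin'_apply] at hv1
  have hBK : (B : Matrix (Fin n) (Fin n) ℂ) * (((B⁻¹ : GL (Fin n) ℂ) : Matrix (Fin n) (Fin n) ℂ) * K) = K := by
    rw [← Matrix.mul_assoc, ← Units.val_mul, mul_inv_cancel, Units.val_one, Matrix.one_mul]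
  have hKv : (K - c • (B : Matrix (Fin n) (Fin n) ℂ)) *ᵥ v = 0 := by
    have := congrArg (fun w => (B : Matrix (Fin n) (Fin n) ℂ) *ᵥ w) hv1
    simp only [Matrix.mulVec_mulVec, hBK, Matrix.mulVec_smul] at this
    rw [Matrix.sub_mulVec, Matrix.smul_mulVec, this, sub_self]
  have hW := hirr (LinearMap.ker (Matrix.toLin' (K - c • (B : Matrix (Fin n) (Fin n) ℂ)))) (by
    intro g hg w hw
    rw [LinearMap.mem_ker, Matrix.toLin'_apply] at hw ⊢
    have hD : (g : Matrix (Fin n) (Fin n) ℂ)ᵀ * (K - c • (B : Matrix (Fin n) (Fin n) ℂ))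
        * (g : Matrix (Fin n) (Fin n) ℂ) = K - c • (B : Matrix (Fin n) (Fin n) ℂ) := by
      rw [Matrix.mul_sub, Matrix.sub_mul, hKg g hg, Matrix.mul_smul, Matrix.smul_mul, hform g hg]
    have hu : IsUnit (g : Matrix (Fin n) (Fin n) ℂ)ᵀ :=
      by
        rw [Matrix.isUnit_iff_isUnit_det, Matrix.det_transpose, ← Matrix.isUnit_iff_isUnit_det]
        exact g.isUnit
    apply Matrix.mulVec_injective_of_isUnit hu
    rw [Matrix.mulVec_mulVec, Matrix.mulVec_mulVec, hD, hw, Matrix.mulVec_zero])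
  have hKc : K = c • (B : Matrix (Fin n) (Fin n) ℂ) := by
    rcases hW with h | h
    · exact absurd ((Submodule.eq_bot_iff _).mp h v (by
        rw [LinearMap.mem_ker, Matrix.toLin'_apply, hKv])) hv0
    · rw [LinearMap.ker_eq_top] at h
      exact sub_eq_zero.mp ((Matrix.toLin').map_eq_zero_iff.mp h)
  refine ⟨c, ?_, hKc⟩
  rintro rfl
  have ht : IsUnit (A : Matrix (Fin n) (Fin n) ℂ)ᵀ := by
    rw [Matrix.isUnit_iff_isUnit_det, Matrix.det_transpose, ← Matrix.isUnit_iff_isUnit_det]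
    exact A.isUnit
  have hu : IsUnit K := (ht.mul B.isUnit).mul A.isUnit
  rw [hKc, zero_smul] at hu
  exact not_isUnit_zero hu
end

section
/- Let t ∈ ℂ with t⁶ ≠ 1. If x : Fin 6 → ℂ satisfies (x i)⁵ = t · ∏_{j ≠ i} x j for every index i (where the product is over the five indices j different from i), then x = 0. -/
/-- Jacobian criterion for smoothness of the sextic Dwork hypersurface: for
`t⁶ ≠ 1`, the only common zero of the partial derivatives is the origin. -/
theorem dwork_sextic_smooth (t : ℂ) (ht : t ^ 6 ≠ 1) (x : Fin 6 → ℂ)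
    (hx : ∀ i : Fin 6, (x i) ^ 5 = t * ∏ j ∈ Finset.univ.erase i, x j) :
    x = 0 := by
  have h6 : ∀ i, x i ^ 6 = t * ∏ j, x j := by
    intro i
    rw [← Finset.mul_prod_erase Finset.univ x (Finset.mem_univ i), pow_succ, hx i]
    ring
  have hP : (∏ j, x j) ^ 6 = t ^ 6 * (∏ j, x j) ^ 6 := by
    rw [← mul_pow, ← Finset.prod_pow, Finset.prod_congr rfl (fun i _ => h6 i)]
    simp
  have h0 : ∏ j, x j = 0 := by
    by_contra h
    exact ht (mul_right_cancel₀ (pow_ne_zero 6 h) (by rw [one_mul]; exact hP.symm))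
  funext i
  have := h6 i
  rw [h0, mul_zero] at this
  simpa using this
end

section
/- Let S be the 8×8 complex matrix with S_{jk} = 1 if j + k = 7 and S_{jk} = 0 otherwise (indices 0 ≤ j,k ≤ 7). Let ζ ∈ ℂ be a primitive 8th root of unity and let D be the diagonal 8×8 matrix with diagonal entries (ζ, ζ², ζ³, 1, 1, ζ⁻³, ζ⁻², ζ⁻¹). Then the ℂ-vector space {X ∈ M₈(ℂ) : Xᵀ·S + S·X = 0 and X·D = D·X} has dimension 4. -/
open Matrix

/-- The space of matrices `X` lying in the orthogonal Lie algebra of the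
bilinear form `S` (i.e. `Xᵀ S + S X = 0`) and commuting with `M`. -/
noncomputable def soCentralizer {n : ℕ} (S M : Matrix (Fin n) (Fin n) ℂ) :
    Submodule ℂ (Matrix (Fin n) (Fin n) ℂ) where
  carrier := {X | Xᵀ * S + S * X = 0 ∧ X * M = M * X}
  add_mem' := by
    intro a b ha hb
    obtain ⟨ha1, ha2⟩ := ha
    obtain ⟨hb1, hb2⟩ := hb
    refine ⟨?_, ?_⟩
    · have h : (a + b)ᵀ * S + S * (a + b) = (aᵀ * S + S * a) + (bᵀ * S + S * b) := by
        rw [Matrix.transpose_add]; noncomm_ring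
      rw [h, ha1, hb1, add_zero]
    · rw [Matrix.add_mul, Matrix.mul_add, ha2, hb2]
  zero_mem' := by simp
  smul_mem' := by
    intro c a ha
    obtain ⟨h1, h2⟩ := ha
    refine ⟨?_, ?_⟩
    · rw [Matrix.transpose_smul, Matrix.smul_mul, Matrix.mul_smul, ← smul_add, h1, smul_zero]
    · rw [Matrix.smul_mul, Matrix.mul_smul, h2]

/-- The diagonal matrix with entries `v₀, v₁, v₂, v₃, -v₃, -v₂, -v₁, -v₀`. -/
noncomputable def soCartanMap : (Fin 4 → ℂ) →ₗ[ℂ] Matrix (Fin 8) (Fin 8) ℂ where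
  toFun v := Matrix.diagonal ![v 0, v 1, v 2, v 3, -v 3, -v 2, -v 1, -v 0]
  map_add' v w := by
    rw [Matrix.diagonal_add]
    congr 1
    funext i
    fin_cases i <;> simp <;> ring
  map_smul' c v := by
    rw [RingHom.id_apply, ← Matrix.diagonal_smul]
    congr 1
    funext i
    fin_cases i <;> simp

theorem soCartanMap_injective : Function.Injective soCartanMap := by
  intro v w h
  have h' := Matrix.diagonal_injective h
  funext i
  fin_cases i
  · simpa using congrFun h' 0
  · simpa using congrFun h' 1
  · simpa using congrFun h' 2
  · simpa using congrFun h' 3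

theorem form_iff (S X : Matrix (Fin 8) (Fin 8) ℂ)
    (hS : ∀ j k : Fin 8, S j k = if (j : ℕ) + (k : ℕ) = 7 then 1 else 0) :
    Xᵀ * S + S * X = 0 ↔ ∀ j k, X k.rev j + X j.rev k = 0 := by
  have h1 : ∀ j k, (Xᵀ * S) j k = X k.rev j := by
    intro j k
    rw [Matrix.mul_apply, Finset.sum_eq_single k.rev]
    · rw [hS, if_pos (by rw [Fin.val_rev]; omega)]; simp
    · intro b _ hb
      rw [hS, if_neg, mul_zero]
      intro h
      exact hb (Fin.ext (by rw [Fin.val_rev]; omega))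
    · simp
  have h2 : ∀ j k, (S * X) j k = X j.rev k := by
    intro j k
    rw [Matrix.mul_apply, Finset.sum_eq_single j.rev]
    · rw [hS, if_pos (by rw [Fin.val_rev]; omega)]; simp
    · intro b _ hb
      rw [hS, if_neg, zero_mul]
      intro h
      exact hb (Fin.ext (by rw [Fin.val_rev]; omega))
    · simp
  rw [← Matrix.ext_iff]
  simp only [Matrix.add_apply, h1, h2, Matrix.zero_apply]

/-- The centralizer in `𝔰𝔬₈` of the semisimple element with eigenvalues
`ζ₈^{±1}, ζ₈^{±2}, ζ₈^{±3}, 1, 1` has dimension 4. -/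
theorem so8_centralizer_of_zeta8_dim_four
    (S D : Matrix (Fin 8) (Fin 8) ℂ)
    (hS : ∀ j k : Fin 8, S j k = if (j : ℕ) + (k : ℕ) = 7 then 1 else 0)
    (ζ : ℂ) (hζ : IsPrimitiveRoot ζ 8)
    (hD : D = Matrix.diagonal
      ![ζ, ζ ^ 2, ζ ^ 3, 1, 1, (ζ ^ 3)⁻¹, (ζ ^ 2)⁻¹, ζ⁻¹]) :
    Module.finrank ℂ (soCentralizer S D) = 4 := by
  have h8 : ζ ^ 8 = 1 := hζ.pow_eq_one
  have hD' : D = Matrix.diagonal fun i => ζ ^ ((![1, 2, 3, 0, 0, 5, 6, 7] : Fin 8 → ℕ) i) := by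
    rw [hD]
    congr 1
    funext i
    fin_cases i <;> simp <;> apply inv_eq_of_mul_eq_one_right <;> linear_combination h8
  have hrange : soCentralizer S D = LinearMap.range soCartanMap := by
    ext X
    change (Xᵀ * S + S * X = 0 ∧ X * D = D * X) ↔ _
    rw [form_iff S X hS]
    constructor
    · rintro ⟨hf, hc⟩
      have hz : ∀ i j : Fin 8, (![1, 2, 3, 0, 0, 5, 6, 7] : Fin 8 → ℕ) i ≠
          (![1, 2, 3, 0, 0, 5, 6, 7] : Fin 8 → ℕ) j → X i j = 0 := by
        intro i j hij
        have hlt : ∀ i : Fin 8, (![1, 2, 3, 0, 0, 5, 6, 7] : Fin 8 → ℕ) i < 8 := by decide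
        have h := congrFun (congrFun hc i) j
        rw [hD', Matrix.mul_diagonal, Matrix.diagonal_mul] at h
        by_contra hX
        apply hij
        apply hζ.pow_inj (hlt i) (hlt j)
        apply mul_left_cancel₀ hX
        rw [h, mul_comm]
      have h34 : X 3 4 = 0 := by
        have h : X 3 4 + X 3 4 = 0 := hf 4 4
        linear_combination h / 2
      have h43 : X 4 3 = 0 := by
        have h : X 4 3 + X 4 3 = 0 := hf 3 3
        linear_combination h / 2
      have hoff : ∀ i j : Fin 8, i ≠ j → X i j = 0 := by
        intro i j hij
        by_cases he : (![1, 2, 3, 0, 0, 5, 6, 7] : Fin 8 → ℕ) i =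
          (![1, 2, 3, 0, 0, 5, 6, 7] : Fin 8 → ℕ) j
        · have key : ∀ i j : Fin 8, i ≠ j → (![1, 2, 3, 0, 0, 5, 6, 7] : Fin 8 → ℕ) i =
              (![1, 2, 3, 0, 0, 5, 6, 7] : Fin 8 → ℕ) j →
              (i = 3 ∧ j = 4) ∨ (i = 4 ∧ j = 3) := by decide
          rcases key i j hij he with ⟨rfl, rfl⟩ | ⟨rfl, rfl⟩
          · exact h34
          · exact h43
        · exact hz i j he
      have e0 : X 7 7 + X 0 0 = 0 := (hf 7 0)
      have e1 : X 6 6 + X 1 1 = 0 := (hf 6 1)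
      have e2 : X 5 5 + X 2 2 = 0 := (hf 5 2)
      have e3 : X 4 4 + X 3 3 = 0 := (hf 4 3)
      refine ⟨![X 0 0, X 1 1, X 2 2, X 3 3], ?_⟩
      change Matrix.diagonal _ = X
      ext i j
      by_cases hij : i = j
      · subst hij
        rw [Matrix.diagonal_apply_eq]
        fin_cases i
        · rfl
        · rfl
        · rfl
        · rfl
        · exact (eq_neg_of_add_eq_zero_left e3).symm
        · exact (eq_neg_of_add_eq_zero_left e2).symm
        · exact (eq_neg_of_add_eq_zero_left e1).symm
        · exact (eq_neg_of_add_eq_zero_left e0).symm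
      · rw [Matrix.diagonal_apply_ne _ hij, hoff i j hij]
    · rintro ⟨v, rfl⟩
      change (∀ j k : Fin 8, Matrix.diagonal _ k.rev j + Matrix.diagonal _ j.rev k = 0) ∧
        Matrix.diagonal _ * D = D * Matrix.diagonal _
      constructor
      · intro j k
        by_cases hjk : k.rev = j
        · subst hjk
          rw [Fin.rev_rev, Matrix.diagonal_apply_eq, Matrix.diagonal_apply_eq]
          fin_cases k <;> simp [Fin.rev]
        · rw [Matrix.diagonal_apply_ne _ hjk, Matrix.diagonal_apply_ne, add_zero]
          intro h
          exact hjk (by rw [← h, Fin.rev_rev])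
      · rw [hD', Matrix.diagonal_mul_diagonal, Matrix.diagonal_mul_diagonal]
        congr 1
        funext i
        exact mul_comm _ _
  rw [hrange, LinearMap.finrank_range_of_inj soCartanMap_injective]
  simp
end
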